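/- Let T be a rooted tree on the vertex set of a flow graph G that has the parent property, together with a low-high order on G. Let r : V \ {s} → V be a function such that for every v ≠ s, (r(v), v) ∈ A and either r(v) = t(v), or r(v) > v in the low-high order and r(v) is not a descendant of v in T. Let R be the directed graph on V with arc set {(r(v), v) : v ≠ s}. Then for every vertex v ≠ s, there is a path in R from t(v) to v that contains only t(v) and vertices that are no less than v in the low-high order. -/

import Mathlib

/-!
Every arc `(r v, v)` of `R` goes down in the postorder of `T` that visits siblings in increasing
order: `r v` is either the parent of `v` or lies to the right of the whole subtree of `v`. Hence
following `r` from `v` cannot go on forever. By the parent property it stays among the proper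
descendants of `t(v)` until it reaches `t(v)`, and it never drops below `v` before that: the only
decreasing moves are to parents, and a parent `u` crossing `v`, i.e. `u < v ≤ y` with `u` the parent
of `y`, has `v` in its interval of descendants, so that `u` is an ancestor of `t(v)`
and therefore equal to it.
-/

variable {V : Type*}

/-- `IsWalk A u v p`: `p` is a path from `u` to `v` in the digraph with arc
relation `A`, listing all of its vertices in order. -/
def IsWalk (A : V → V → Prop) (u v : V) (p : List V) : Prop :=
  p.Chain' A ∧ p.head? = some u ∧ p.getLast? = some v

/-- A flow graph: a directed graph with arc relation `A` and start vertex `s`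
such that every vertex is reachable from `s` and no arc enters `s`. -/
structure FlowGraph (V : Type*) where
  A : V → V → Prop
  s : V
  reach : ∀ v : V, ∃ p : List V, IsWalk A s v p
  no_enter : ∀ v : V, ¬ A v s

/-- `DomOn A s v w`: `v` lies on every path from `s` to `w` in the digraph with
arc relation `A`. -/
def DomOn (A : V → V → Prop) (s v w : V) : Prop :=
  ∀ p : List V, IsWalk A s w p → v ∈ p

/-- `v` dominates `w` in the flow graph `G`. -/
def FlowGraph.Dom (G : FlowGraph V) (v w : V) : Prop :=
  DomOn G.A G.s v w

/-- A rooted tree on vertex set `V`, given by a parent function: the root is a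
fixed point of the parent function, and iterating the parent function from any
vertex eventually reaches the root. -/
structure ParentTree (V : Type*) where
  parent : V → V
  root : V
  parent_root : parent root = root
  reaches_root : ∀ v : V, ∃ n : ℕ, parent^[n] v = root

/-- `T.Anc x y`: `x` is an ancestor of `y` in the rooted tree `T` (every vertex
is an ancestor of itself). -/
def ParentTree.Anc (T : ParentTree V) (x y : V) : Prop :=
  ∃ n : ℕ, T.parent^[n] y = x

/-- `T` has the parent property with respect to `G`: for every arc `(v, w)`,
the parent of `w` is an ancestor of `v` in `T`. -/
def ParentProperty (G : FlowGraph V) (T : ParentTree V) : Prop :=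
  ∀ v w : V, G.A v w → T.Anc (T.parent w) v

/-- The sibling property with respect to an arbitrary arc relation `A` with
start vertex `s`: no non-root vertex dominates a distinct vertex with the same
parent. -/
def SiblingPropertyOn (A : V → V → Prop) (s : V) (T : ParentTree V) : Prop :=
  ∀ v w : V, v ≠ T.root → w ≠ T.root → v ≠ w → T.parent v = T.parent w →
    ¬ DomOn A s v w

/-- `T` has the sibling property with respect to the flow graph `G`. -/
def SiblingProperty (G : FlowGraph V) (T : ParentTree V) : Prop :=
  SiblingPropertyOn G.A G.s T

/-- `T` is the dominator tree of the digraph with arc relation `A` and start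
vertex `s`: `T` is rooted at `s`, and the parent of every vertex `v ≠ s` is its
immediate dominator, i.e. a strict dominator of `v` that is dominated by every
strict dominator of `v`. -/
def IsDomTreeOn (A : V → V → Prop) (s : V) (T : ParentTree V) : Prop :=
  T.root = s ∧ ∀ v : V, v ≠ s →
    DomOn A s (T.parent v) v ∧ T.parent v ≠ v ∧
    ∀ u : V, DomOn A s u v → u ≠ v → DomOn A s u (T.parent v)

/-- `T` is the dominator tree of the flow graph `G`. -/
def IsDomTree (G : FlowGraph V) (T : ParentTree V) : Prop :=
  IsDomTreeOn G.A G.s T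

/-- `ord` is (the numbering of) a preorder of the rooted tree `T`: an injective
numbering of the vertices such that for every vertex `v` the descendants of `v`
are ordered consecutively, with `v` first. -/
def IsTreePreorder (T : ParentTree V) (ord : V → ℕ) : Prop :=
  Function.Injective ord ∧
  (∀ v x : V, T.Anc v x → ord v ≤ ord x) ∧
  (∀ v x y z : V, T.Anc v x → T.Anc v z → ord x ≤ ord y → ord y ≤ ord z →
    T.Anc v y)

/-- A preorder `ord` of `T` is low-high on the digraph with arc relation `A`
and start vertex `s`: for every `v ≠ s`, either `(t(v), v)` is an arc, or there
are arcs `(u, v)` and `(w, v)` with `u < v < w` in the order and `w` not a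
descendant of `v` in `T`. -/
def LowHighOn (A : V → V → Prop) (s : V) (T : ParentTree V) (ord : V → ℕ) :
    Prop :=
  IsTreePreorder T ord ∧
  ∀ v : V, v ≠ s → (A (T.parent v) v ∨
    ∃ u w : V, A u v ∧ A w v ∧ ord u < ord v ∧ ord v < ord w ∧ ¬ T.Anc v w)

/-- A low-high order of `T` on the flow graph `G`. -/
def LowHigh (G : FlowGraph V) (T : ParentTree V) (ord : V → ℕ) : Prop :=
  LowHighOn G.A G.s T ord

/-- `B` is (the arc relation of) a spanning tree of `G` rooted at `s`: a
subgraph of `G` in which no arc enters `s`, every vertex other than `s` has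
exactly one entering arc, and every vertex is reachable from `s`. -/
def IsSpanningTree (G : FlowGraph V) (B : V → V → Prop) : Prop :=
  (∀ u v : V, B u v → G.A u v) ∧
  (∀ v : V, ¬ B v G.s) ∧
  (∀ v : V, v ≠ G.s → ∃! u : V, B u v) ∧
  (∀ v : V, ∃ p : List V, IsWalk B G.s v p)

/-- Spanning trees `B` and `R` of `G` rooted at `s` are independent: for every
vertex `v`, the paths from `s` to `v` in `B` and in `R` have in common only
dominators of `v`. -/
def Independent (G : FlowGraph V) (B R : V → V → Prop) : Prop :=
  ∀ v : V, ∀ p q : List V, IsWalk B G.s v p → IsWalk R G.s v q →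
    ∀ x : V, x ∈ p → x ∈ q → G.Dom x v

/-- Spanning trees `B` and `R` of `G` rooted at `s` are strongly independent:
for every pair of vertices `v`, `w`, either the path from `s` to `v` in `B` and
the path from `s` to `w` in `R` have in common only common dominators of `v`
and `w`, or the same holds with the roles of `B` and `R` exchanged. -/
def StronglyIndependent (G : FlowGraph V) (B R : V → V → Prop) : Prop :=
  ∀ v w : V,
    (∀ p q : List V, IsWalk B G.s v p → IsWalk R G.s w q →
      ∀ x : V, x ∈ p → x ∈ q → G.Dom x v ∧ G.Dom x w) ∨
    (∀ p q : List V, IsWalk R G.s v p → IsWalk B G.s w q →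
      ∀ x : V, x ∈ p → x ∈ q → G.Dom x v ∧ G.Dom x w)

/-- `IsDerivedArcOf G T v b a`: `(a, b)` is the derived arc of the arc `(v, b)`
of `G` with respect to `T`: `b` is not an ancestor of `v` in `T`, and `a = v`
if `v` is the parent of `b`, while otherwise `a` is the sibling of `b` in `T`
that is an ancestor of `v`. -/
def IsDerivedArcOf (G : FlowGraph V) (T : ParentTree V) (v b a : V) : Prop :=
  G.A v b ∧ ¬ T.Anc b v ∧
    ((v = T.parent b ∧ a = v) ∨
     (v ≠ T.parent b ∧ a ≠ T.root ∧ T.parent a = T.parent b ∧ T.Anc a v))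

/-- The arc relation of the derived graph of `G` with respect to `T`. -/
def DerivedArc (G : FlowGraph V) (T : ParentTree V) (a b : V) : Prop :=
  ∃ v : V, IsDerivedArcOf G T v b a

/-- `S` is the vertex set of a strongly connected subgraph of the digraph with
arc relation `A`. -/
def StronglyConnectedSet (A : V → V → Prop) (S : Set V) : Prop :=
  S.Nonempty ∧ ∀ u ∈ S, ∀ v ∈ S, ∃ p : List V,
    IsWalk A u v p ∧ ∀ x ∈ p, x ∈ S

/-- `G` is reducible: every strongly connected subgraph has a single entry
vertex, i.e. a vertex of the subgraph contained in every path from `s` to a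
vertex of the subgraph. -/
def Reducible (G : FlowGraph V) : Prop :=
  ∀ S : Set V, StronglyConnectedSet G.A S →
    ∃ v ∈ S, ∀ u ∈ S, ∀ p : List V, IsWalk G.A G.s u p → v ∈ p

/-- A digraph is acyclic if it has no cycle (a path from a vertex to itself
with at least one arc). -/
def Acyclic (A : V → V → Prop) : Prop :=
  ¬ ∃ (v : V) (p : List V), IsWalk A v v p ∧ 2 ≤ p.length

/-- `IsHighWalk A ν u v p`: `p` is a high path from `u` to `v`: a path all of
whose vertices other than `u` and `v` are greater (in the numbering `ν`) than
both `u` and `v`. -/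
def IsHighWalk (A : V → V → Prop) (ν : V → ℕ) (u v : V) (p : List V) : Prop :=
  IsWalk A u v p ∧ ∀ x ∈ p, x ≠ u → x ≠ v → ν u < ν x ∧ ν v < ν x

theorem exists_isWalk_of_reflTransGen {A : V → V → Prop} {P : V → Prop} {u v : V}
    (h : Relation.ReflTransGen (fun a b => A a b ∧ P b) u v) :
    ∃ p : List V, IsWalk A u v p ∧ ∀ x ∈ p, x = u ∨ P x := by
  obtain ⟨l, hchain, hlast⟩ := List.exists_isChain_cons_of_relationReflTransGen h
  refine ⟨u :: l, ⟨hchain.imp fun _ _ hab => hab.1, rfl, ?_⟩, ?_⟩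
  · rw [List.getLast?_eq_getLast_of_ne_nil (List.cons_ne_nil u l), hlast]
  · exact hchain.induction (fun x => x = u ∨ P x) _ (fun _ _ hab _ => .inr hab.2) fun _ => .inl rfl

namespace ParentTree

variable {T : ParentTree V} {x y z : V}

theorem Anc.refl (T : ParentTree V) (x : V) : T.Anc x x := ⟨0, rfl⟩

theorem anc_parent (T : ParentTree V) (x : V) : T.Anc (T.parent x) x := ⟨1, rfl⟩

theorem Anc.trans : T.Anc x y → T.Anc y z → T.Anc x z := by
  rintro ⟨m, rfl⟩ ⟨n, rfl⟩
  exact ⟨m + n, Function.iterate_add_apply T.parent m n z⟩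

theorem Anc.eq_or_anc_parent : T.Anc x y → x = y ∨ T.Anc x (T.parent y)
  | ⟨0, h⟩ => .inl h.symm
  | ⟨n + 1, h⟩ => .inr ⟨n, h⟩

theorem parent_ne_of_ne_root (hx : x ≠ T.root) : T.parent x ≠ x := by
  intro hfix
  obtain ⟨n, hn⟩ := T.reaches_root x
  exact hx ((Function.iterate_fixed hfix n).symm.trans hn)

/-- The postorder of `T` that visits siblings in the order given by the preorder `ord`: `y` precedes
its proper ancestors and the non-descendants that follow it in `ord`. Following `r`
moves up in this order, hence terminates. -/
def PostorderLT (T : ParentTree V) (ord : V → ℕ) (y z : V) : Prop :=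
  T.Anc z y ∧ z ≠ y ∨ ord y < ord z ∧ ¬ T.Anc y z

end ParentTree

namespace IsTreePreorder

open ParentTree

variable {T : ParentTree V} {ord : V → ℕ} {v x y z : V}

theorem anc_of_le_of_le (hord : IsTreePreorder T ord) (hxz : T.Anc x z) (hxy : ord x ≤ ord y)
    (hyz : ord y ≤ ord z) : T.Anc x y :=
  hord.2.2 x x y z (Anc.refl T x) hxz hxy hyz

theorem anc_antisymm (hord : IsTreePreorder T ord) (hxy : T.Anc x y) (hyx : T.Anc y x) : x = y :=
  hord.1 (le_antisymm (hord.2.1 x y hxy) (hord.2.1 y x hyx))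

theorem lt_of_anc_of_not_anc (hord : IsTreePreorder T ord) (hxy : T.Anc x y) (hxz : ¬ T.Anc x z)
    (hlt : ord x < ord z) : ord y < ord z :=
  lt_of_not_ge fun hzy => hxz (hord.anc_of_le_of_le hxy hlt.le hzy)

theorem ne_root_of_le (hord : IsTreePreorder T ord) (hv : v ≠ T.root) (hvx : ord v ≤ ord x) :
    x ≠ T.root := by
  rintro rfl
  exact hv (hord.1 (le_antisymm hvx (hord.2.1 _ _ (T.reaches_root v))))

theorem parent_eq_or_le_parent (hord : IsTreePreorder T ord) (hy : T.Anc (T.parent v) y)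
    (hne : y ≠ T.parent v) (hvy : ord v ≤ ord y) :
    T.parent y = T.parent v ∨ ord v ≤ ord (T.parent y) := by
  by_contra! ⟨hparent, hlt⟩
  have hcross : T.Anc (T.parent y) v := hord.anc_of_le_of_le (anc_parent T y) hlt.le hvy
  have hdown : T.Anc (T.parent y) (T.parent v) :=
    hcross.eq_or_anc_parent.resolve_left fun h => hlt.ne (congrArg ord h)
  have hup : T.Anc (T.parent v) (T.parent y) := hy.eq_or_anc_parent.resolve_left hne.symm
  exact hparent (hord.anc_antisymm hdown hup)

theorem postorderLT_irrefl (x : V) : ¬ T.PostorderLT ord x x := by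
  rintro (⟨-, hne⟩ | ⟨hlt, -⟩)
  exacts [hne rfl, lt_irrefl _ hlt]

theorem postorderLT_trans (hord : IsTreePreorder T ord) :
    T.PostorderLT ord x y → T.PostorderLT ord y z → T.PostorderLT ord x z := by
  rintro (⟨hyx, hne⟩ | ⟨hxy, hnxy⟩) (⟨hzy, -⟩ | ⟨hyz, hnyz⟩)
  · refine .inl ⟨hzy.trans hyx, ?_⟩
    rintro rfl
    exact hne (hord.anc_antisymm hyx hzy)
  · exact .inr ⟨hord.lt_of_anc_of_not_anc hyx hnyz hyz, fun hxz => hnyz (hyx.trans hxz)⟩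
  · have hnxz : ¬ T.Anc x z := fun hxz => hnxy (hxz.trans hzy)
    rcases lt_or_ge (ord x) (ord z) with hlt | hge
    · exact .inr ⟨hlt, hnxz⟩
    · refine .inl ⟨hord.anc_of_le_of_le hzy hge hxy.le, ?_⟩
      rintro rfl
      exact hnxz (Anc.refl T z)
  · exact .inr ⟨hxy.trans hyz, fun hxz => hnxy (hord.anc_of_le_of_le hxz hxy.le hyz.le)⟩

theorem wellFounded_flip_postorderLT [Finite V] (hord : IsTreePreorder T ord) :
    WellFounded (flip (T.PostorderLT ord)) :=
  haveI : IsTrans V (flip (T.PostorderLT ord)) :=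
    ⟨fun _ _ _ hxy hyz => hord.postorderLT_trans hyz hxy⟩
  haveI : Std.Irrefl (flip (T.PostorderLT ord)) := ⟨postorderLT_irrefl⟩
  Finite.wellFounded_of_trans_of_irrefl _

theorem reflTransGen_parent [Finite V] (hord : IsTreePreorder T ord) {r : V → V}
    (hanc : ∀ x, x ≠ T.root → T.Anc (T.parent x) (r x))
    (hr : ∀ x, x ≠ T.root → r x = T.parent x ∨ ord x < ord (r x) ∧ ¬ T.Anc x (r x))
    (hv : v ≠ T.root) (y : V) (hy : T.Anc (T.parent v) y) (hvy : ord v ≤ ord y) :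
    Relation.ReflTransGen (fun a b => (b ≠ T.root ∧ r b = a) ∧ ord v ≤ ord b) (T.parent v) y := by
  induction y using hord.wellFounded_flip_postorderLT.induction with
  | _ y ih =>
  rcases eq_or_ne y (T.parent v) with rfl | hne
  · exact .refl
  have hyroot : y ≠ T.root := hord.ne_root_of_le hv hvy
  have hpost : T.PostorderLT ord y (r y) :=
    (hr y hyroot).imp_left fun hparent => by
      rw [hparent]
      exact ⟨anc_parent T y, parent_ne_of_ne_root hyroot⟩
  have hstay : T.Anc (T.parent v) (r y) :=
    (hy.eq_or_anc_parent.resolve_left hne.symm).trans (hanc y hyroot)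
  have hhigh : r y = T.parent v ∨ ord v ≤ ord (r y) := by
    rcases hr y hyroot with h | ⟨hlt, -⟩
    · exact h ▸ hord.parent_eq_or_le_parent hy hne hvy
    · exact .inr (hvy.trans hlt.le)
  have hwalk : Relation.ReflTransGen (fun a b => (b ≠ T.root ∧ r b = a) ∧ ord v ≤ ord b)
      (T.parent v) (r y) := by
    rcases hhigh with h | h
    · exact h ▸ .refl
    · exact ih (r y) hpost hstay h
  exact hwalk.tail ⟨⟨hyroot, rfl⟩, hvy⟩

end IsTreePreorder

theorem stmt5_general [Finite V] {T : ParentTree V} {ord : V → ℕ} (hord : IsTreePreorder T ord)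
    {r : V → V} (hanc : ∀ x, x ≠ T.root → T.Anc (T.parent x) (r x))
    (hr : ∀ x, x ≠ T.root → r x = T.parent x ∨ ord x < ord (r x) ∧ ¬ T.Anc x (r x))
    (v : V) (hv : v ≠ T.root) :
    ∃ p : List V,
      IsWalk (fun a b => b ≠ T.root ∧ r b = a) (T.parent v) v p ∧
      ∀ x ∈ p, x = T.parent v ∨ ord v ≤ ord x :=
  exists_isWalk_of_reflTransGen
    (hord.reflTransGen_parent hanc hr hv v (ParentTree.anc_parent T v) le_rfl)

/-- Given a tree `T` with the parent property and a low-high order, and a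
function `r` choosing for each `v ≠ s` an arc `(r(v), v)` of `G` with either
`r(v) = t(v)`, or `r(v) > v` and `r(v)` not a descendant of `v`, the graph `R`
with arcs `(r(v), v)` contains, for each `v ≠ s`, a path from `t(v)` to `v`
containing only `t(v)` and vertices no less than `v` in the order. -/
theorem stmt5 [Fintype V] (G : FlowGraph V) (T : ParentTree V)
    (hroot : T.root = G.s) (hpp : ParentProperty G T)
    (ord : V → ℕ) (hlh : LowHigh G T ord)
    (r : V → V)
    (hr : ∀ v : V, v ≠ G.s → G.A (r v) v ∧
      (r v = T.parent v ∨ (ord v < ord (r v) ∧ ¬ T.Anc v (r v))))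
    (v : V) (hv : v ≠ G.s) :
    ∃ p : List V,
      IsWalk (fun a b => b ≠ G.s ∧ r b = a) (T.parent v) v p ∧
      ∀ x ∈ p, x = T.parent v ∨ ord v ≤ ord x := by
  rw [← hroot] at hr hv ⊢
  exact stmt5_general hlh.1 (fun x hx => hpp _ _ (hr x hx).1) (fun x hx => (hr x hx).2) v hv
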